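/- arXiv:math/0503532 — 3 statements merged into one kernel-verified Lean document; each statement's English description precedes it below -/
import Mathlib

section
/- Assume (SA0)–(SA2). For all s > 0 and all c ≥ 1, the set {x ∈ ℝ : V_s(x) ≤ c} is compact. Moreover, there exist constants 0 ≤ λ_0 < λ < 1, s > 0, c_0 ≤ c, b < ∞ and γ̄ > 0 such that for all γ ≥ γ̄: (i) K_γ V_s ≤ λ_0 V_s + b 1_{{V_s ≤ c_0}}, and (ii) K̄_γ V̄_s ≤ λ V̄_s + b 1_{{V_s ≤ c} × {V_s ≤ c}}, where K̄_γ(x,x'; A×A') := K_γ(x,A) K_γ(x',A') and V̄_s(x,x') := (V_s(x) + V_s(x'))/2. -/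
/-!
Take `s = 1`. Write `V = e^f` and `d = f y - f x`; one step from `x` averages
`a V(y) + (1 - a) V(x)` over the proposal `y`, where `a = min 1 e^{-γ d}`.

* An uphill proposal (`d > 0`) multiplies `V` on average by `1 + e^{-γ d}(e^d - 1)`, which is at
  most `1 + 1/γ` by Bernoulli's inequality (`exp_neg_mul_exp_sub_one_le`).
* A downhill proposal is always accepted and never increases `V`; if `f` drops by at least `α`
  then `V` shrinks by the factor `e^{-α}`.

Hence, if every increment in a set `J` lowers `f` by at least `α` at `x`, then
`K_γ V (x) ≤ V(x) (1 + 1/γ - (1 - e^{-α}) ∫_J q)` (`lintegral_rwmKernel_exp_le`). With `J = ∅` this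
gives `K_γ V ≤ 2 V` everywhere for `γ ≥ 1`. For `|x| ≥ |x₁| + 2` the growth condition allows `J = [-2,-1]` or
`J = [1,2]`, and the gain `(1 - e^{-α}) ∫_J q > 0` beats `1/γ` once `γ` is large. The remaining
`x` form a compact set, on which `V` is bounded by some `c₀`.

The bivariate drift follows since `K_γ` is a probability kernel: if `V` exceeds `c` at one of the
two points then `V̄ > c/2`, so for `c` large the additive constant `b` is absorbed by enlarging
`λ₀` to `λ`.
-/

open MeasureTheory Set
open scoped ENNReal

/-- The random walk Metropolis–Hastings kernel `K_γ`. -/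
noncomputable def rwmKernel (f q : ℝ → ℝ) (γ x : ℝ) : Measure ℝ :=
  volume.withDensity
      (fun y => ENNReal.ofReal (min 1 (Real.exp (-γ * (f y - f x))) * q (y - x))) +
    (∫⁻ y, ENNReal.ofReal ((1 - min 1 (Real.exp (-γ * (f y - f x)))) * q (y - x))) •
      Measure.dirac x

lemma exp_neg_mul_exp_sub_one_le {γ d : ℝ} (hγ : 1 ≤ γ) :
    Real.exp (-γ * d) * (Real.exp d - 1) ≤ 1 / γ := by
  have h1 : 1 + γ * (Real.exp d - 1) ≤ (1 + (Real.exp d - 1)) ^ γ :=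
    one_add_mul_self_le_rpow_one_add (by linarith [Real.exp_pos d]) hγ
  have h2 : (1 + (Real.exp d - 1)) ^ γ = Real.exp (γ * d) := by
    rw [add_sub_cancel, ← Real.exp_mul, mul_comm]
  rw [h2] at h1
  rw [neg_mul, Real.exp_neg, inv_mul_eq_div, div_le_div_iff₀ (Real.exp_pos _) (by linarith)]
  nlinarith

/-- Bound on the integrand of `K_γ V (x)` against the proposal density, with a gain when the
increment `y - x` lies in `J`. -/
lemma metropolis_pointwise_le {f : ℝ → ℝ} {γ x y α : ℝ} {J : Set ℝ} (hγ : 1 ≤ γ) (hα : 0 < α)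
    (hJ : ∀ u ∈ J, f (x + u) ≤ f x - α) :
    min 1 (Real.exp (-γ * (f y - f x))) * Real.exp (f y) +
        (1 - min 1 (Real.exp (-γ * (f y - f x)))) * Real.exp (f x) ≤
      Real.exp (f x) * (1 + 1 / γ - (1 - Real.exp (-α)) * J.indicator 1 (y - x)) := by
  have hV : Real.exp (f y) = Real.exp (f x) * Real.exp (f y - f x) := by
    rw [← Real.exp_add]; congr 1; ring
  have hx := Real.exp_pos (f x)
  have hγ' : 0 < 1 / γ := by positivity
  rw [hV]
  set d := f y - f x
  suffices H : min 1 (Real.exp (-γ * d)) * (Real.exp d - 1) ≤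
      1 / γ - (1 - Real.exp (-α)) * J.indicator 1 (y - x) by
    nlinarith [mul_le_mul_of_nonneg_left H hx.le]
  by_cases hy : y - x ∈ J
  · have h1 := hJ _ hy
    rw [add_sub_cancel] at h1
    have hdα : d ≤ -α := by linarith
    have h2 : min 1 (Real.exp (-γ * d)) = 1 :=
      min_eq_left (Real.one_le_exp (by nlinarith))
    have h3 := Real.exp_le_exp.2 hdα
    simp only [h2, indicator_of_mem hy, Pi.one_apply]
    linarith
  · simp only [indicator_of_notMem hy, mul_zero, sub_zero]
    rcases le_total d 0 with h | h
    · have : Real.exp d ≤ 1 := Real.exp_le_one_iff.2 h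
      have h4 : 0 ≤ min 1 (Real.exp (-γ * d)) := le_min zero_le_one (Real.exp_pos _).le
      nlinarith
    · have : 1 ≤ Real.exp d := Real.one_le_exp h
      exact (mul_le_mul_of_nonneg_right (min_le_right _ _) (by linarith)).trans
        (exp_neg_mul_exp_sub_one_le hγ)

lemma lintegral_rwmKernel {f q : ℝ → ℝ} {γ : ℝ} (hf : Continuous f) (hq : Continuous q)
    (hqpos : ∀ y, 0 < q y) (x : ℝ) {g : ℝ → ℝ} (hg : Continuous g) (hg0 : ∀ y, 0 ≤ g y) :
    ∫⁻ y, ENNReal.ofReal (g y) ∂(rwmKernel f q γ x) =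
      ∫⁻ y, ENNReal.ofReal ((min 1 (Real.exp (-γ * (f y - f x))) * g y +
        (1 - min 1 (Real.exp (-γ * (f y - f x)))) * g x) * q (y - x)) := by
  have ha0 : ∀ y, 0 ≤ min 1 (Real.exp (-γ * (f y - f x))) := fun y =>
    le_min zero_le_one (Real.exp_pos _).le
  have ha1 : ∀ y, 0 ≤ 1 - min 1 (Real.exp (-γ * (f y - f x))) := fun y =>
    sub_nonneg.2 (min_le_left _ _)
  have hm1 : Measurable fun y =>
      ENNReal.ofReal (min 1 (Real.exp (-γ * (f y - f x))) * q (y - x)) :=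
    ENNReal.measurable_ofReal.comp (Continuous.measurable (by fun_prop))
  have hm2 : Measurable fun y =>
      ENNReal.ofReal ((1 - min 1 (Real.exp (-γ * (f y - f x)))) * q (y - x)) :=
    ENNReal.measurable_ofReal.comp (Continuous.measurable (by fun_prop))
  have hmg : Measurable fun y => ENNReal.ofReal (g y) :=
    ENNReal.measurable_ofReal.comp hg.measurable
  rw [rwmKernel, lintegral_add_measure, lintegral_smul_measure, lintegral_dirac' _ hmg,
    lintegral_withDensity_eq_lintegral_mul _ hm1 hmg, smul_eq_mul, ← lintegral_mul_const _ hm2,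
    ← lintegral_add_left (hm1.mul hmg)]
  refine lintegral_congr fun y => ?_
  have hq0 := (hqpos (y - x)).le
  simp only [Pi.mul_apply]
  rw [← ENNReal.ofReal_mul (mul_nonneg (ha0 y) hq0), ← ENNReal.ofReal_mul (mul_nonneg (ha1 y) hq0),
    ← ENNReal.ofReal_add (mul_nonneg (mul_nonneg (ha0 y) hq0) (hg0 y))
      (mul_nonneg (mul_nonneg (ha1 y) hq0) (hg0 x))]
  congr 1; ring

lemma rwmKernel_univ {f q : ℝ → ℝ} {γ : ℝ} (hf : Continuous f) (hq : Continuous q)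
    (hqpos : ∀ y, 0 < q y) (hqint : ∫ y, q y = 1) (x : ℝ) :
    rwmKernel f q γ x Set.univ = 1 := by
  have h := lintegral_rwmKernel (γ := γ) hf hq hqpos x (g := fun _ => 1) continuous_const
    (fun _ => zero_le_one)
  simp only [ENNReal.ofReal_one, lintegral_const, one_mul, mul_one, add_sub_cancel] at h
  rw [h, lintegral_sub_right_eq_self (fun u => ENNReal.ofReal (q u)) x,
    ← ofReal_integral_eq_lintegral_ofReal (integrable_of_integral_eq_one hqint)
      (Filter.Eventually.of_forall fun y => (hqpos y).le), hqint, ENNReal.ofReal_one]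

/-- The one-step bound: increments in `J` lower `f` by at least `α`, and the `q`-mass of `J` counts
against the uphill loss `1/γ`. -/
lemma lintegral_rwmKernel_exp_le {f q : ℝ → ℝ} {γ x α : ℝ} {J : Set ℝ} (hf : Continuous f)
    (hq : Continuous q) (hqpos : ∀ y, 0 < q y) (hqint : ∫ y, q y = 1)
    (hγ : 1 ≤ γ) (hα : 0 < α) (hJm : MeasurableSet J) (hJ : ∀ u ∈ J, f (x + u) ≤ f x - α) :
    ∫⁻ y, ENNReal.ofReal (Real.exp (f y)) ∂(rwmKernel f q γ x) ≤
      ENNReal.ofReal (Real.exp (f x) * (1 + 1 / γ - (1 - Real.exp (-α)) * ∫ u in J, q u)) := by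
  have hqi := integrable_of_integral_eq_one hqint
  have hγ' : 0 < 1 / γ := by positivity
  set F : ℝ → ℝ := fun u =>
    Real.exp (f x) * ((1 + 1 / γ) * q u - (1 - Real.exp (-α)) * J.indicator q u) with hF
  have hFint : ∫ u, F u =
      Real.exp (f x) * (1 + 1 / γ - (1 - Real.exp (-α)) * ∫ u in J, q u) := by
    rw [hF, integral_const_mul, integral_sub (hqi.const_mul _) ((hqi.indicator hJm).const_mul _),
      integral_const_mul, integral_const_mul, hqint, integral_indicator hJm, mul_one]
  have hFi : Integrable F :=
    ((hqi.const_mul _).sub ((hqi.indicator hJm).const_mul _)).const_mul _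
  have hF0 : ∀ u, 0 ≤ F u := fun u => by
    refine mul_nonneg (Real.exp_pos _).le ?_
    have h1 : J.indicator q u ≤ q u := indicator_le_self' (fun _ _ => (hqpos _).le) u
    have h2 : 0 ≤ J.indicator q u := indicator_nonneg (fun _ _ => (hqpos _).le) u
    nlinarith [Real.exp_pos (-α), hqpos u, mul_nonneg (Real.exp_pos (-α)).le h2,
      mul_pos hγ' (hqpos u)]
  rw [lintegral_rwmKernel hf hq hqpos x (by fun_prop) (fun y => (Real.exp_pos _).le), ← hFint,
    ofReal_integral_eq_lintegral_ofReal hFi (Filter.Eventually.of_forall hF0),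
    ← lintegral_sub_right_eq_self (fun u => ENNReal.ofReal (F u)) x]
  refine lintegral_mono fun y => ENNReal.ofReal_le_ofReal ?_
  refine (mul_le_mul_of_nonneg_right (metropolis_pointwise_le hγ hα hJ)
    (hqpos (y - x)).le).trans (le_of_eq ?_)
  simp only [hF]
  by_cases hy : y - x ∈ J
  · simp only [indicator_of_mem hy, Pi.one_apply]; ring
  · simp only [indicator_of_notMem hy]; ring

lemma setIntegral_Icc_pos {q : ℝ → ℝ} (hq : Continuous q) (hqpos : ∀ y, 0 < q y) {a b : ℝ}
    (hab : a < b) : 0 < ∫ u in Set.Icc a b, q u := by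
  rw [integral_Icc_eq_integral_Ioc, ← intervalIntegral.integral_of_le hab.le]
  exact intervalIntegral.intervalIntegral_pos_of_pos (hq.intervalIntegrable _ _) hqpos hab

lemma isCompact_sublevel_exp {f : ℝ → ℝ} (hf : Continuous f) {α x₁ : ℝ} (hα : 0 < α)
    (hgrow1 : ∀ x y : ℝ, x₁ ≤ x → x ≤ y → α * (y - x) ≤ f y - f x)
    (hgrow2 : ∀ x y : ℝ, x ≤ -x₁ → y ≤ x → α * (x - y) ≤ f y - f x)
    {s : ℝ} (hs : 0 < s) (c : ℝ) : IsCompact {x : ℝ | Real.exp (s * f x) ≤ c} := by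
  have hcl : IsClosed {x : ℝ | Real.exp (s * f x) ≤ c} :=
    isClosed_le (by fun_prop) continuous_const
  have key : ∀ x, Real.exp (s * f x) ≤ c → f x ≤ c / s := fun x hx => by
    rw [le_div_iff₀ hs]
    linarith [Real.add_one_le_exp (s * f x)]
  -- beyond `±x₁` the growth condition gives `α * |x ∓ x₁| ≤ c / s - f (±x₁)`
  refine (isCompact_Icc (a := min (-x₁) (-x₁ - (c / s - f (-x₁)) / α))
    (b := max x₁ (x₁ + (c / s - f x₁) / α))).of_isClosed_subset hcl fun x hx => ?_
  have hfx := key x hx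
  constructor
  · rcases le_total x (-x₁) with h | h
    · refine (min_le_right _ _).trans ?_
      have := hgrow2 (-x₁) x le_rfl h
      have : -x₁ - x ≤ (c / s - f (-x₁)) / α := by
        rw [le_div_iff₀ hα]; linarith
      linarith
    · exact (min_le_left _ _).trans h
  · rcases le_total x₁ x with h | h
    · refine le_trans ?_ (le_max_right _ _)
      have := hgrow1 x₁ x le_rfl h
      have : x - x₁ ≤ (c / s - f x₁) / α := by
        rw [le_div_iff₀ hα]; linarith
      linarith
    · exact h.trans (le_max_left _ _)

/-- Univariate drift for `V = e^f`, with constants in the form used for the bivariate drift. -/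
lemma exists_univariate_drift {f q : ℝ → ℝ} (hf : Continuous f) {α x₁ : ℝ} (hα : 0 < α)
    (hgrow1 : ∀ x y : ℝ, x₁ ≤ x → x ≤ y → α * (y - x) ≤ f y - f x)
    (hgrow2 : ∀ x y : ℝ, x ≤ -x₁ → y ≤ x → α * (x - y) ≤ f y - f x)
    (hqc : Continuous q) (hqpos : ∀ y, 0 < q y) (hqint : ∫ y, q y = 1) :
    ∃ lam₀ c₀ b γbar : ℝ, 0 ≤ lam₀ ∧ lam₀ < 1 ∧ 0 ≤ b ∧ 0 < γbar ∧ ∀ γ : ℝ, γbar ≤ γ → ∀ x : ℝ,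
      ∫⁻ y, ENNReal.ofReal (Real.exp (f y)) ∂(rwmKernel f q γ x) ≤
        ENNReal.ofReal (lam₀ * Real.exp (f x) +
          Set.indicator {x' : ℝ | Real.exp (f x') ≤ c₀} (fun _ => b) x) := by
  have hqi := integrable_of_integral_eq_one hqint
  set I := min (∫ u in Set.Icc (-2 : ℝ) (-1), q u) (∫ u in Set.Icc (1 : ℝ) 2, q u) with hI
  have hI0 : 0 < I := lt_min (setIntegral_Icc_pos hqc hqpos (by norm_num))
    (setIntegral_Icc_pos hqc hqpos (by norm_num))
  have hI1 : I ≤ 1 := by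
    refine (min_le_left _ _).trans ?_
    rw [← hqint]
    exact setIntegral_le_integral hqi (Filter.Eventually.of_forall fun y => (hqpos y).le)
  set κ := 1 - Real.exp (-α) with hκ
  have hκ0 : 0 < κ := sub_pos.2 (Real.exp_lt_one_iff.2 (by linarith))
  have hκ1 : κ ≤ 1 := by linarith [Real.exp_pos (-α)]
  set δ := κ * I with hδ
  have hδ0 : 0 < δ := mul_pos hκ0 hI0
  have hδ1 : δ ≤ 1 := by nlinarith
  set R := |x₁| + 2 with hR
  obtain ⟨c₀, hc₀⟩ := (isCompact_Icc (a := -R) (b := R)).bddAbove_image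
    (f := fun x => Real.exp (f x)) (by fun_prop)
  have hc₀' : ∀ x ∈ Set.Icc (-R) R, Real.exp (f x) ≤ c₀ := fun x hx =>
    hc₀ (mem_image_of_mem _ hx)
  have hc₀0 : 0 ≤ c₀ := (Real.exp_pos (f 0)).le.trans
    (hc₀' 0 ⟨by simp only [hR]; linarith [abs_nonneg x₁], by positivity⟩)
  refine ⟨1 - δ / 2, c₀, 2 * c₀, 2 / δ, by linarith, by linarith, by linarith, by positivity,
    fun γ hγ x => ?_⟩
  have hγ1 : 1 ≤ γ := by
    refine le_trans ?_ hγ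
    rw [le_div_iff₀ hδ0]; linarith
  have hγ2 : 1 / γ ≤ δ / 2 := by
    rw [div_le_div_iff₀ (by linarith) two_pos]
    rw [div_le_iff₀ hδ0] at hγ
    linarith
  have hV := Real.exp_pos (f x)
  by_cases hx : Real.exp (f x) ≤ c₀
  · refine (lintegral_rwmKernel_exp_le (J := ∅) hf hqc hqpos hqint hγ1 hα MeasurableSet.empty
      (by simp)).trans (ENNReal.ofReal_le_ofReal ?_)
    rw [indicator_of_mem (show x ∈ {x' : ℝ | Real.exp (f x') ≤ c₀} from hx)]
    simp only [Measure.restrict_empty, integral_zero_measure, mul_zero, sub_zero]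
    nlinarith
  · rw [indicator_of_notMem (show x ∉ {x' : ℝ | Real.exp (f x') ≤ c₀} from hx), add_zero]
    have hxR : x ∉ Set.Icc (-R) R := fun h => hx (hc₀' x h)
    have fin : ∀ t, I ≤ t →
        Real.exp (f x) * (1 + 1 / γ - κ * t) ≤ (1 - δ / 2) * Real.exp (f x) := fun t ht => by
      have : δ ≤ κ * t := mul_le_mul_of_nonneg_left ht hκ0.le
      rw [mul_comm]
      exact mul_le_mul_of_nonneg_right (by linarith) hV.le
    rcases lt_or_ge R x with h | h
    · refine (lintegral_rwmKernel_exp_le (J := Set.Icc (-2) (-1)) hf hqc hqpos hqint hγ1 hα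
        measurableSet_Icc ?_).trans (ENNReal.ofReal_le_ofReal (fin _ (min_le_left _ _)))
      rintro u ⟨hu1, hu2⟩
      have := hgrow1 (x + u) x (by linarith [le_abs_self x₁]) (by linarith)
      nlinarith
    · have h' : x < -R := by
        by_contra h2
        exact hxR ⟨not_lt.1 h2, h⟩
      refine (lintegral_rwmKernel_exp_le (J := Set.Icc 1 2) hf hqc hqpos hqint hγ1 hα
        measurableSet_Icc ?_).trans (ENNReal.ofReal_le_ofReal (fin _ (min_le_right _ _)))
      rintro u ⟨hu1, hu2⟩
      have := hgrow2 (x + u) x (by linarith [le_abs_self x₁]) (by linarith)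
      nlinarith

/-- Integrating `V̄` against `K_γ(x,·) ⊗ K_γ(x',·)` reduces to the two marginals, as both have
mass one. -/
lemma lintegral_lintegral_average {μ ν : Measure ℝ} (hμ : μ Set.univ = 1) (hν : ν Set.univ = 1)
    {g : ℝ → ℝ} (hg : Continuous g) (hg0 : ∀ y, 0 ≤ g y) {A B : ℝ} (hA0 : 0 ≤ A) (hB0 : 0 ≤ B)
    (hA : ∫⁻ z, ENNReal.ofReal (g z) ∂μ ≤ ENNReal.ofReal A)
    (hB : ∫⁻ z, ENNReal.ofReal (g z) ∂ν ≤ ENNReal.ofReal B) :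
    ∫⁻ z, (∫⁻ z', ENNReal.ofReal ((g z + g z') / 2) ∂ν) ∂μ ≤ ENNReal.ofReal ((A + B) / 2) := by
  have hm : Measurable fun y => ENNReal.ofReal (g y) :=
    ENNReal.measurable_ofReal.comp hg.measurable
  have e : ∀ u v : ℝ, 0 ≤ u → 0 ≤ v → ENNReal.ofReal ((u + v) / 2) =
      ENNReal.ofReal (1 / 2) * (ENNReal.ofReal u + ENNReal.ofReal v) := fun u v hu hv => by
    rw [← ENNReal.ofReal_add hu hv, ← ENNReal.ofReal_mul (by norm_num)]
    congr 1; ring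
  have h1 : ∀ z, ∫⁻ z', ENNReal.ofReal ((g z + g z') / 2) ∂ν = ENNReal.ofReal (1 / 2) *
      (ENNReal.ofReal (g z) + ∫⁻ z', ENNReal.ofReal (g z') ∂ν) := fun z => by
    simp_rw [e _ _ (hg0 z) (hg0 _)]
    rw [lintegral_const_mul _ (hm.const_add _), lintegral_add_left measurable_const, lintegral_const, hν, mul_one]
  simp_rw [h1]
  rw [lintegral_const_mul _ (hm.add_const _), lintegral_add_right _ measurable_const,
    lintegral_const, hμ, mul_one, e A B hA0 hB0]
  gcongr

/-- Proposition 11: the level sets of `V_s = e^{sf}` are compact, and there are a common small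
set, drift function and constants such that for every large enough inverse temperature `γ` the
kernels `K_γ` (univariate drift) and `K̄_γ = K_γ ⊗ K_γ` (bivariate drift, with
`V̄_s(x,x') = (V_s(x) + V_s(x'))/2`) satisfy geometric drift conditions. -/
theorem rwm_uniform_drift
    (f q : ℝ → ℝ)
    -- (SA0)
    (hf : ContDiff ℝ 2 f) (α x₁ : ℝ) (hα : 0 < α)
    (hgrow1 : ∀ x y : ℝ, x₁ ≤ x → x ≤ y → α * (y - x) ≤ f y - f x)
    (hgrow2 : ∀ x y : ℝ, x ≤ -x₁ → y ≤ x → α * (x - y) ≤ f y - f x)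
    -- (SA1)
    (hSA1 : ∀ x : ℝ, (∀ y, f x ≤ f y) → 0 < deriv (deriv f) x)
    -- (SA2)
    (hqc : Continuous q) (hqpos : ∀ y, 0 < q y) (hqsym : ∀ y, q (-y) = q y)
    (hqint : ∫ y, q y = 1) :
    -- the level sets of V_s are compact
    (∀ s c : ℝ, 0 < s → 1 ≤ c → IsCompact {x : ℝ | Real.exp (s * f x) ≤ c}) ∧
    -- uniform-in-γ univariate and bivariate drift conditions
    ∃ lam₀ lam s c₀ c b γbar : ℝ,
      0 ≤ lam₀ ∧ lam₀ < lam ∧ lam < 1 ∧ 0 < s ∧ c₀ ≤ c ∧ 0 < γbar ∧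
      ∀ γ : ℝ, γbar ≤ γ →
        -- (39): K_γ V_s ≤ λ₀ V_s + b 1_{V_s ≤ c₀}
        (∀ x : ℝ, ∫⁻ y, ENNReal.ofReal (Real.exp (s * f y)) ∂(rwmKernel f q γ x) ≤
          ENNReal.ofReal (lam₀ * Real.exp (s * f x) +
            Set.indicator {x' : ℝ | Real.exp (s * f x') ≤ c₀} (fun _ => b) x)) ∧
        -- (40): K̄_γ V̄_s ≤ λ V̄_s + b 1_{{V_s ≤ c} × {V_s ≤ c}}
        (∀ p : ℝ × ℝ,
          ∫⁻ z, (∫⁻ z', ENNReal.ofReal ((Real.exp (s * f z) + Real.exp (s * f z')) / 2)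
              ∂(rwmKernel f q γ p.2)) ∂(rwmKernel f q γ p.1) ≤
            ENNReal.ofReal (lam * ((Real.exp (s * f p.1) + Real.exp (s * f p.2)) / 2) +
              Set.indicator
                ({x' : ℝ | Real.exp (s * f x') ≤ c} ×ˢ {x' : ℝ | Real.exp (s * f x') ≤ c})
                (fun _ => b) p)) := by
  have hfc : Continuous f := hf.continuous
  refine ⟨fun s c hs _ => isCompact_sublevel_exp hfc hα hgrow1 hgrow2 hs c, ?_⟩
  obtain ⟨lam₀, c₀, b, γbar, h0, h1, hb, hγb, H⟩ :=
    exists_univariate_drift hfc hα hgrow1 hgrow2 hqc hqpos hqint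
  -- `λ` is the midpoint of `λ₀` and `1`; `c` is chosen so that `b ≤ (λ - λ₀) c / 2`
  refine ⟨lam₀, (lam₀ + 1) / 2, 1, c₀, max c₀ (4 * b / (1 - lam₀)), b, γbar, h0, by linarith,
    by linarith, one_pos, le_max_left _ _, hγb, fun γ hγ => ?_⟩
  simp only [one_mul]
  refine ⟨H γ hγ, fun p => ?_⟩
  set c := max c₀ (4 * b / (1 - lam₀)) with hc
  have hbc : 4 * b ≤ c * (1 - lam₀) :=
    (div_le_iff₀ (by linarith)).1 (le_max_right c₀ (4 * b / (1 - lam₀)))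
  set S := {x' : ℝ | Real.exp (f x') ≤ c₀}
  have hS0 : ∀ x, 0 ≤ S.indicator (fun _ => b) x := fun x => indicator_nonneg (fun _ _ => hb) x
  have hSb : ∀ x, S.indicator (fun _ => b) x ≤ b := fun x =>
    indicator_le_self' (fun _ _ => hb) x
  have hA0 : ∀ x, 0 ≤ lam₀ * Real.exp (f x) + S.indicator (fun _ => b) x := fun x =>
    add_nonneg (mul_nonneg h0 (Real.exp_pos _).le) (hS0 x)
  refine (lintegral_lintegral_average (rwmKernel_univ hfc hqc hqpos hqint p.1)
    (rwmKernel_univ hfc hqc hqpos hqint p.2) (g := fun z => Real.exp (f z)) (by fun_prop)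
    (fun _ => (Real.exp_pos _).le) (hA0 p.1) (hA0 p.2) (H γ hγ p.1) (H γ hγ p.2)).trans
    (ENNReal.ofReal_le_ofReal ?_)
  have hV1 := Real.exp_pos (f p.1)
  have hV2 := Real.exp_pos (f p.2)
  have hb1 := hSb p.1
  have hb2 := hSb p.2
  by_cases hp : p ∈ {x' : ℝ | Real.exp (f x') ≤ c} ×ˢ {x' : ℝ | Real.exp (f x') ≤ c}
  · rw [indicator_of_mem hp]
    nlinarith
  · rw [indicator_of_notMem hp]
    have hsum : c ≤ Real.exp (f p.1) + Real.exp (f p.2) := by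
      by_contra hlt
      exact hp ⟨by simp only [mem_ofPred_eq]; linarith, by simp only [mem_ofPred_eq]; linarith⟩
    nlinarith [mul_le_mul_of_nonneg_right hsum (sub_pos.2 h1).le]
end

section
/- Let h be a nonnegative measurable function on a measure space (X, B(X), μ) such that 0 < ∫ h^γ dμ < ∞ for all γ > γ_0 > 0 and 0 < ‖h‖_∞ := ess sup h < ∞. For γ ≥ γ_0, let μ_γ be the probability measure with density h^γ / ∫ h^γ dμ with respect to μ, and set Z(γ) := (∫ h^γ dμ) / ‖h‖_∞^γ. Then for all γ' ≥ γ ≥ γ_0, ‖μ_γ − μ_{γ'}‖_TV ≤ 2 log(Z(γ)/Z(γ')). -/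
/-!
Write `M` for the essential supremum of `h`, `P` and `Q` for the normalized measures with exponents
`γ ≤ γ'`, and `s = Z(γ) / Z(γ')`. Since `h ≤ M` almost everywhere, `(h / M) ^ γ' ≤ (h / M) ^ γ`,
which after normalization says `s⁻¹ • Q ≤ P` (`smul_density_le`). Two probability measures with
`r • Q ≤ P` are at total variation distance at most `2 (1 - r)` (`abs_integral_sub_le`), and
`1 - s⁻¹ ≤ log s`.
-/


open MeasureTheory
open scoped ENNReal

/-- The total variation distance `‖μ - ν‖_TV = sup_{|φ| ≤ 1} |μ(φ) - ν(φ)|`. -/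
noncomputable def tvDist {X : Type*} [MeasurableSpace X] (μ ν : Measure X) : ℝ≥0∞ :=
  ⨆ (φ : X → ℝ) (_ : Measurable φ) (_ : ∀ x, |φ x| ≤ 1) (_ : Integrable φ μ)
    (_ : Integrable φ ν), ENNReal.ofReal |∫ x, φ x ∂μ - ∫ x, φ x ∂ν|

/-- The domination `r • Q ≤ P` applied to the nonnegative function `1 - φ` gives
`r (1 - Q φ) ≤ 1 - P φ`, hence `P φ - Q φ ≤ (1 - r) (1 - Q φ)`. -/
lemma integral_sub_le {X : Type*} [MeasurableSpace X] (P Q : Measure X)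
    [IsProbabilityMeasure P] [IsProbabilityMeasure Q] (r : ℝ≥0∞) (hr : r ≤ 1)
    (hle : r • Q ≤ P) (φ : X → ℝ) (hφ : ∀ x, |φ x| ≤ 1) (hP : Integrable φ P)
    (hQ : Integrable φ Q) :
    ∫ x, φ x ∂P - ∫ x, φ x ∂Q ≤ 2 * (1 - r.toReal) := by
  have h1 : ∫ x, (1 - φ x) ∂(r • Q) ≤ ∫ x, (1 - φ x) ∂P := by
    refine integral_mono_measure hle (Filter.Eventually.of_forall fun x => ?_)
      ((integrable_const 1).sub hP)
    have := (abs_le.1 (hφ x)).2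
    simp only [Pi.zero_apply]
    linarith
  rw [integral_smul_measure, integral_sub (integrable_const 1) hP,
    integral_sub (integrable_const 1) hQ] at h1
  simp only [integral_const, probReal_univ, smul_eq_mul, mul_one] at h1
  have h2 : -1 ≤ ∫ x, φ x ∂Q := by
    have := integral_mono (integrable_const (-1 : ℝ)) hQ (fun x => (abs_le.1 (hφ x)).1)
    simpa using this
  have h3 : r.toReal ≤ 1 := by
    simpa using ENNReal.toReal_mono ENNReal.one_ne_top hr
  nlinarith

lemma abs_integral_sub_le {X : Type*} [MeasurableSpace X] (P Q : Measure X)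
    [IsProbabilityMeasure P] [IsProbabilityMeasure Q] (r : ℝ≥0∞)
    (hle : r • Q ≤ P) (φ : X → ℝ) (hφ : ∀ x, |φ x| ≤ 1) (hP : Integrable φ P)
    (hQ : Integrable φ Q) :
    |∫ x, φ x ∂P - ∫ x, φ x ∂Q| ≤ 2 * (1 - r.toReal) := by
  have hr : r ≤ 1 := by simpa using hle Set.univ
  refine abs_le.2 ⟨?_, integral_sub_le P Q r hr hle φ hφ hP hQ⟩
  have := integral_sub_le P Q r hr hle (fun x => -φ x) (by simpa using hφ) hP.neg hQ.neg
  rw [integral_neg, integral_neg] at this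
  linarith

/-- With `H = h ^ γ`, `H' = h ^ γ'`, `p = M ^ γ`, `q = M ^ γ'`, and `a`, `b` the integrals of `H`
and `H'`, this is the pointwise form of the domination `s⁻¹ • Q ≤ P`. -/
lemma smul_density_le {a b p q H H' : ℝ≥0∞} (hb : b ≠ 0) (hb' : b ≠ ⊤)
    (hp : p ≠ 0) (hp' : p ≠ ⊤) (hq : q ≠ 0) (hq' : q ≠ ⊤)
    (hH : H' * p ≤ H * q) :
    ((a / p) / (b / q))⁻¹ * (H' / b) ≤ H / a := by
  have hbq : b / q ≠ 0 := ENNReal.div_ne_zero.2 ⟨hb, hq'⟩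
  have hbq' : b / q ≠ ⊤ := ENNReal.div_ne_top hb' hq
  rw [ENNReal.inv_div (Or.inl hbq') (Or.inl hbq)]
  have hap : (a / p)⁻¹ = p / a := ENNReal.inv_div (Or.inl hp') (Or.inl hp)
  calc b / q / (a / p) * (H' / b) = (b * b⁻¹) * (H' * p) * q⁻¹ * a⁻¹ := by
        rw [div_eq_mul_inv (b / q), hap]
        simp only [div_eq_mul_inv]
        ring
    _ ≤ 1 * (H * q) * q⁻¹ * a⁻¹ := by
        rw [ENNReal.mul_inv_cancel hb hb']
        gcongr
    _ = H / a := by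
        rw [one_mul, mul_assoc H, ENNReal.mul_inv_cancel hq hq', mul_one, div_eq_mul_inv]

lemma isProbabilityMeasure_withDensity_div {X : Type*} [MeasurableSpace X] (μ : Measure X)
    (f : X → ℝ≥0∞) (hf : Measurable f) (h0 : ∫⁻ x, f x ∂μ ≠ 0) (hT : ∫⁻ x, f x ∂μ ≠ ⊤) :
    IsProbabilityMeasure (μ.withDensity (fun x => f x / ∫⁻ y, f y ∂μ)) := by
  constructor
  rw [withDensity_apply _ MeasurableSet.univ, Measure.restrict_univ]
  simp only [div_eq_mul_inv]
  rw [lintegral_mul_const _ hf, ENNReal.mul_inv_cancel h0 hT]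

/-- Lemma A.1: for `μ_γ ∝ h^γ dμ` and `Z(γ) = (∫ h^γ dμ)/‖h‖_∞^γ`, one has
`‖μ_γ - μ_{γ'}‖_TV ≤ 2 log(Z(γ)/Z(γ'))` for `γ' ≥ γ ≥ γ₀`. -/
theorem tv_bound_tempered_measures
    {X : Type*} [MeasurableSpace X] (μ : Measure X)
    (h : X → ℝ≥0∞) (hm : Measurable h)
    (γ₀ : ℝ) (hγ₀ : 0 < γ₀)
    (hint : ∀ γ : ℝ, γ₀ ≤ γ → 0 < ∫⁻ x, h x ^ γ ∂μ ∧ ∫⁻ x, h x ^ γ ∂μ < ⊤)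
    (hess0 : 0 < essSup h μ) (hessT : essSup h μ < ⊤) :
    ∀ γ γ' : ℝ, γ₀ ≤ γ → γ ≤ γ' →
      tvDist (μ.withDensity (fun x => h x ^ γ / ∫⁻ y, h y ^ γ ∂μ))
          (μ.withDensity (fun x => h x ^ γ' / ∫⁻ y, h y ^ γ' ∂μ)) ≤
        ENNReal.ofReal (2 * Real.log
          ((((∫⁻ x, h x ^ γ ∂μ) / essSup h μ ^ γ) /
            ((∫⁻ x, h x ^ γ' ∂μ) / essSup h μ ^ γ')).toReal)) := by
  intro γ γ' hγ hγ'
  have hγpos : 0 ≤ γ := hγ₀.le.trans hγ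
  obtain ⟨ha, ha'⟩ := hint γ hγ
  obtain ⟨hb, hb'⟩ := hint γ' (hγ.trans hγ')
  have hP := isProbabilityMeasure_withDensity_div μ (fun x => h x ^ γ) (hm.pow_const γ)
    ha.ne' ha'.ne
  have hQ := isProbabilityMeasure_withDensity_div μ (fun x => h x ^ γ') (hm.pow_const γ')
    hb.ne' hb'.ne
  have hM (t : ℝ) : essSup h μ ^ t ≠ 0 := (ENNReal.rpow_pos hess0 hessT.ne).ne'
  have hM' (t : ℝ) : essSup h μ ^ t ≠ ⊤ := ENNReal.rpow_ne_top_of_ne_zero hess0.ne' hessT.ne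
  have hdens : ∀ᵐ x ∂μ,
      h x ^ γ' * essSup h μ ^ γ ≤ h x ^ γ * essSup h μ ^ γ' := by
    filter_upwards [ENNReal.ae_le_essSup h] with x hx
    have hsplit (y : ℝ≥0∞) : y ^ γ' = y ^ γ * y ^ (γ' - γ) := by
      rw [← ENNReal.rpow_add_of_nonneg _ _ hγpos (sub_nonneg.2 hγ'), add_sub_cancel]
    rw [hsplit (h x), hsplit (essSup h μ), mul_assoc, mul_comm (essSup h μ ^ γ)]
    gcongr
  set a := ∫⁻ x, h x ^ γ ∂μ
  set b := ∫⁻ x, h x ^ γ' ∂μ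
  set s := (a / essSup h μ ^ γ) / (b / essSup h μ ^ γ') with hs
  have hle : s⁻¹ • μ.withDensity (fun x => h x ^ γ' / b) ≤
      μ.withDensity (fun x => h x ^ γ / a) := by
    rw [← withDensity_smul _ ((hm.pow_const γ').div_const b)]
    refine withDensity_mono ?_
    filter_upwards [hdens] with x hx
    exact smul_density_le hb.ne' hb'.ne (hM γ) (hM' γ) (hM γ') (hM' γ') hx
  have hs0 : s ≠ 0 :=
    ENNReal.div_ne_zero.2 ⟨ENNReal.div_ne_zero.2 ⟨ha.ne', hM' γ⟩,
      ENNReal.div_ne_top hb'.ne (hM γ')⟩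
  have hsT : s ≠ ⊤ :=
    ENNReal.div_ne_top (ENNReal.div_ne_top ha'.ne (hM γ))
      (ENNReal.div_ne_zero.2 ⟨hb.ne', hM' γ'⟩)
  refine iSup_le fun φ => iSup_le fun _ => iSup_le fun hφ => iSup_le fun hφP =>
    iSup_le fun hφQ => ENNReal.ofReal_le_ofReal ?_
  have hmain := abs_integral_sub_le _ _ s⁻¹ hle φ hφ hφP hφQ
  rw [ENNReal.toReal_inv] at hmain
  have hlog := Real.one_sub_inv_le_log_of_pos (ENNReal.toReal_pos hs0 hsT)
  linarith
end

section
/- Let f and g be two probability density functions with respect to a common dominating measure μ on (X, B(X)). Assume ‖f‖_∞ < ∞, ‖g‖_∞ < ∞, and f(x)/‖f‖_∞ ≥ g(x)/‖g‖_∞ for μ-almost every x. Then ∫ |f − g| dμ ≤ 2 log(‖g‖_∞ / ‖f‖_∞). -/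
/-!
Put `c = ‖f‖_∞ / ‖g‖_∞`. The hypothesis says `c * g ≤ f` almost everywhere, and integrating it
gives `c ≤ 1`; hence `c * g ≤ min f g` and `c ≤ ∫ min f g`. Since `|f - g|` is the sum of
`f - min f g` and `g - min f g`, its integral is `2 (1 - ∫ min f g) ≤ 2 (1 - c)`, and
`1 - c ≤ -log c` is the elementary bound on the logarithm.
-/

open MeasureTheory
open scoped ENNReal

/-- Lemma A.2: if `f` and `g` are probability densities with respect to `μ` with finite
essential suprema and `f/‖f‖_∞ ≥ g/‖g‖_∞` `μ`-a.e., then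
`∫ |f - g| dμ ≤ 2 log(‖g‖_∞/‖f‖_∞)`. -/
theorem l1_bound_ordered_densities
    {X : Type*} [MeasurableSpace X] (μ : Measure X)
    (f g : X → ℝ≥0∞) (hfm : Measurable f) (hgm : Measurable g)
    (hf1 : ∫⁻ x, f x ∂μ = 1) (hg1 : ∫⁻ x, g x ∂μ = 1)
    (hfT : essSup f μ < ⊤) (hgT : essSup g μ < ⊤)
    (hord : ∀ᵐ x ∂μ, g x / essSup g μ ≤ f x / essSup f μ) :
    ∫⁻ x, (max (f x) (g x) - min (f x) (g x)) ∂μ ≤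
      ENNReal.ofReal (2 * Real.log ((essSup g μ / essSup f μ).toReal)) := by
  have hne : ∀ h : X → ℝ≥0∞, ∫⁻ x, h x ∂μ = 1 → essSup h μ ≠ 0 := by
    intro h h1 h0
    have hz : h =ᵐ[μ] 0 := ENNReal.essSup_eq_zero_iff.1 h0
    rw [lintegral_congr_ae hz] at h1
    simp at h1
  have hF0 := hne f hf1
  have hG0 := hne g hg1
  set F := essSup f μ
  set G := essSup g μ
  obtain ⟨c, hc⟩ : ∃ c, c = F / G := ⟨_, rfl⟩
  have hc0 : c ≠ 0 := by rw [hc]; exact ENNReal.div_ne_zero.2 ⟨hF0, hgT.ne⟩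
  have hcT : c ≠ ⊤ := by rw [hc]; exact ENNReal.div_ne_top hfT.ne hG0
  have hcinv : G / F = c⁻¹ := by
    rw [hc, ENNReal.inv_div (Or.inl hgT.ne) (Or.inl hG0)]
  have hcg : ∀ᵐ x ∂μ, c * g x ≤ f x := by
    filter_upwards [hord] with x hx
    calc c * g x = F * (g x / G) := by
          rw [hc, div_eq_mul_inv, div_eq_mul_inv]; ring
      _ ≤ F * (f x / F) := by gcongr
      _ = f x := ENNReal.mul_div_cancel hF0 hfT.ne
  have hcint : ∫⁻ x, c * g x ∂μ = c := by
    rw [lintegral_const_mul _ hgm, hg1, mul_one]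
  have hc1 : c ≤ 1 := by
    rw [← hcint, ← hf1]
    exact lintegral_mono_ae hcg
  have hm : c ≤ ∫⁻ x, min (f x) (g x) ∂μ := by
    rw [← hcint]
    refine lintegral_mono_ae ?_
    filter_upwards [hcg] with x hx
    exact le_min hx (mul_le_of_le_one_left' hc1)
  have hmT : ∫⁻ x, min (f x) (g x) ∂μ ≠ ⊤ := by
    refine ne_top_of_le_ne_top ENNReal.one_ne_top ?_
    rw [← hf1]
    exact lintegral_mono fun x => min_le_left _ _
  have hmm : Measurable fun x => min (f x) (g x) := hfm.min hgm
  have key : ∫⁻ x, (max (f x) (g x) - min (f x) (g x)) ∂μ ≤ (1 - c) + (1 - c) :=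
    calc ∫⁻ x, (max (f x) (g x) - min (f x) (g x)) ∂μ
        ≤ ∫⁻ x, ((f x - min (f x) (g x)) + (g x - min (f x) (g x))) ∂μ := by
          refine lintegral_mono fun x => ?_
          rcases le_total (f x) (g x) with h | h <;> simp [h]
      _ = (1 - ∫⁻ x, min (f x) (g x) ∂μ) + (1 - ∫⁻ x, min (f x) (g x) ∂μ) := by
          rw [lintegral_add_left (f := fun x => f x - min (f x) (g x)) (hfm.sub hmm),
            lintegral_sub hmm hmT (ae_of_all _ fun x => min_le_left _ _),
            lintegral_sub hmm hmT (ae_of_all _ fun x => min_le_right _ _), hf1, hg1]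
      _ ≤ (1 - c) + (1 - c) := by gcongr
  refine key.trans ?_
  have hpos : 0 < c.toReal := ENNReal.toReal_pos hc0 hcT
  have hle : c.toReal ≤ 1 := ENNReal.toReal_le_of_le_ofReal zero_le_one (by simpa using hc1)
  have hsub : 1 - c = ENNReal.ofReal (1 - c.toReal) := by
    rw [ENNReal.ofReal_sub _ hpos.le, ENNReal.ofReal_one, ENNReal.ofReal_toReal hcT]
  rw [hcinv, ENNReal.toReal_inv, Real.log_inv, hsub,
    ← ENNReal.ofReal_add (by linarith) (by linarith)]
  apply ENNReal.ofReal_le_ofReal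
  linarith [Real.log_le_sub_one_of_pos hpos]
end
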